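/- If F : T → T is a polynomial-like branched covering of a simplicial tree, then its local degree function is unique: if deg₁ and deg₂ are both local degree functions for F, then deg₁(e) = deg₂(e) for every edge e and deg₁(v) = deg₂(v) for every vertex v. -/

import Mathlib

open SimpleGraph Function Opposite

/-- A locally finite simplicial tree together with a self-map that is a
branched covering: a simplicial map (edges map onto edges) such that the
induced map on edges adjacent to any vertex is surjective onto the edges
adjacent to the image vertex, and every vertex has finitely many preimages. -/
structure TreeDyn (V : Type) where
  G : SimpleGraph V
  isTree : G.IsTree
  locFin : ∀ v : V, (G.neighborSet v).Finite
  F : V → V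
  adjMap : ∀ ⦃v w : V⦄, G.Adj v w → G.Adj (F v) (F w)
  edgeSurj : ∀ ⦃v w' : V⦄, G.Adj (F v) w' → ∃ w : V, G.Adj v w ∧ F w = w'
  finFibers : ∀ v' : V, {v : V | F v = v'}.Finite

namespace TreeDyn

variable {V : Type}

/-- A local degree function for the branched covering `T.F`: positive on
vertices and edges (edges adjacent to `v` are recorded by their other
endpoint), symmetric on edges, satisfying the Riemann–Hurwitz style
inequality `2 deg(v) - 2 ≥ Σ (deg e - 1)` at each vertex, and the local
equality `deg v = Σ {deg e' : e' adjacent to v, F(e') = F(e)}` for each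
edge `e` adjacent to `v`. -/
def IsLocalDeg (T : TreeDyn V) (dV : V → ℕ) (dE : V → V → ℕ) : Prop :=
  (∀ v w : V, dE v w = dE w v) ∧
  (∀ v : V, 0 < dV v) ∧
  (∀ ⦃v w : V⦄, T.G.Adj v w → 0 < dE v w) ∧
  (∀ v : V, (∑ᶠ w ∈ T.G.neighborSet v, (dE v w - 1)) + 2 ≤ 2 * dV v) ∧
  (∀ ⦃v w : V⦄, T.G.Adj v w →
    dV v = ∑ᶠ w' ∈ {w' : V | T.G.Adj v w' ∧ T.F w' = T.F w}, dE v w')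

/-- `x` and `y` are in the same grand orbit if `F^[n] x = F^[m] y` for some `n, m > 0`. -/
def GrandOrbit (T : TreeDyn V) (x y : V) : Prop :=
  ∃ n m : ℕ, 0 < n ∧ 0 < m ∧ T.F^[n] x = T.F^[m] y

end TreeDyn

/-- The natural topology on the space of ends of a graph: the subspace
topology induced from the product of the (discrete) spaces of components
of complements of finite sets. -/
def endTop {V : Type} (G : SimpleGraph V) : TopologicalSpace G.end :=
  TopologicalSpace.induced Subtype.val
    (⨅ K : (Finset V)ᵒᵖ, TopologicalSpace.induced (fun f => f K) ⊥)

/-- An end is isolated if it is an isolated point of the space of ends. -/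
def IsIsolatedEnd {V : Type} (G : SimpleGraph V) (e : G.end) : Prop :=
  @IsOpen G.end (endTop G) {e}

namespace TreeDyn

variable {V : Type}

/-- `T` is polynomial-like with distinguished end `infty`:
(II) a local degree function exists, (I) `infty` is the unique isolated end,
(III) no vertex has valence one, and (IV) the grand orbit of every vertex
contains a vertex of valence at least three. -/
def IsPolyLike (T : TreeDyn V) (infty : T.G.end) : Prop :=
  (∃ dV dE, T.IsLocalDeg dV dE) ∧
  IsIsolatedEnd T.G infty ∧
  (∀ e : T.G.end, IsIsolatedEnd T.G e → e = infty) ∧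
  (∀ v : V, (T.G.neighborSet v).ncard ≠ 1) ∧
  (∀ v : V, ∃ w : V, T.GrandOrbit v w ∧ 3 ≤ (T.G.neighborSet w).ncard)

/-- The vertex `x` lies below the vertex `v` (the path from `x` to the
end `infty` passes through `v`): either `x = v`, or `x` and `infty`
determine different components of the complement of `{v}`. -/
def Below (T : TreeDyn V) (infty : T.G.end) (v x : V) : Prop :=
  x = v ∨ ∃ h : x ∉ (({v} : Finset V) : Set V),
    T.G.componentComplMk h ≠ infty.val (op ({v} : Finset V))

/-- The end `p` lies below the vertex `v` (the path from `p` to `infty`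
passes through `v`). -/
def EndBelow (T : TreeDyn V) (infty : T.G.end) (v : V) (p : T.G.end) : Prop :=
  p.val (op ({v} : Finset V)) ≠ infty.val (op ({v} : Finset V))

/-- `v₀` is the base of the tree: the vertex of valence ≥ 3 closest to
`infty`, i.e. every vertex of valence ≥ 3 lies below it. -/
def IsBase (T : TreeDyn V) (infty : T.G.end) (v₀ : V) : Prop :=
  3 ≤ (T.G.neighborSet v₀).ncard ∧
  ∀ w : V, 3 ≤ (T.G.neighborSet w).ncard → T.Below infty v₀ w

open Classical in
/-- The combinatorial height relative to the base `v₀`: `|h v|` is the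
graph distance to `v₀`, with `h v ≥ 0` exactly when `v` lies on the ray
from `v₀` to `infty` (i.e. `v₀` lies below `v`). -/
noncomputable def height (T : TreeDyn V) (infty : T.G.end) (v₀ : V) (v : V) : ℤ :=
  if T.Below infty v v₀ then (T.G.dist v₀ v : ℤ) else -(T.G.dist v₀ v : ℤ)

/-- `Dg` is the global degree of `T.F`: for every edge `{v,w}`, the sum of
the degrees of the edges mapping onto it equals `Dg`. -/
def IsGlobalDeg (T : TreeDyn V) (dE : V → V → ℕ) (Dg : ℕ) : Prop :=
  ∀ ⦃v w : V⦄, T.G.Adj v w →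
    Dg = ∑ᶠ a ∈ {a : V | T.F a = v}, ∑ᶠ b ∈ {b : V | T.G.Adj a b ∧ T.F b = w}, dE a b

/-- The critical multiplicity of a vertex. -/
noncomputable def multV (T : TreeDyn V) (dV : V → ℕ) (dE : V → V → ℕ) (v : V) : ℕ :=
  2 * dV v - 2 - ∑ᶠ w ∈ T.G.neighborSet v, (dE v w - 1)

/-- The critical multiplicity of an end `p ≠ infty`: the limiting
(= minimal) value of `dV` along the path from `infty` to `p`, minus one. -/
noncomputable def multEnd (T : TreeDyn V) (infty : T.G.end) (dV : V → ℕ) (p : T.G.end) : ℕ :=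
  sInf {d : ℕ | ∃ v : V, T.EndBelow infty v p ∧ dV v = d} - 1

/-- `μ` is the mass function: `μ v = 1` for `h(v) ≥ 0` and
`μ(F v) = (deg F / deg v) · μ v`. -/
def IsMass (T : TreeDyn V) (infty : T.G.end) (v₀ : V) (dV : V → ℕ) (Dg : ℕ)
    (μ : V → ℚ) : Prop :=
  (∀ v : V, 0 ≤ T.height infty v₀ v → μ v = 1) ∧
  (∀ v : V, μ (T.F v) = ((Dg : ℚ) / (dV v : ℚ)) * μ v)

end TreeDyn

namespace SimpleGraph

variable {V : Type} {G : SimpleGraph V}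

/-- The vertex `x` lies in the component of the complement of `K` selected by the end `e`. -/
def EndMem (e : G.end) (K : Finset V) (x : V) : Prop :=
  x ∈ (show G.ComponentCompl (K : Set V) from e.val (op K))

theorem EndMem.exists (e : G.end) (K : Finset V) : ∃ x, EndMem e K x :=
  ComponentCompl.nonempty (show G.ComponentCompl (K : Set V) from e.val (op K))

theorem EndMem.notMem {e : G.end} {K : Finset V} {x : V} (h : EndMem e K x) : x ∉ K :=
  ComponentCompl.notMem_of_mem h

theorem EndMem.mono {e : G.end} {K L : Finset V} {x : V} (h : EndMem e L x) (hKL : K ⊆ L) :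
    EndMem e K x := by
  obtain ⟨hx, hL⟩ := h
  exact ⟨fun hK => hx (hKL hK),
    (end_hom_mk_of_mk G e.prop (CategoryTheory.opHomOfLE hKL : op L ⟶ op K) hx hL.symm).symm⟩

theorem EndMem.of_adj {e : G.end} {K : Finset V} {x y : V} (h : EndMem e K x)
    (hxy : G.Adj x y) (hy : y ∉ K) : EndMem e K y :=
  ComponentCompl.mem_of_adj x y h hy hxy

theorem EndMem.induction {e : G.end} {K : Finset V} {x y : V} (hx : EndMem e K x)
    (hy : EndMem e K y) (P : V → Prop) (h : P x)
    (step : ∀ a b, G.Adj a b → a ∉ K → b ∉ K → P a → P b) : P y := by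
  obtain ⟨hxK, hx⟩ := hx
  obtain ⟨hyK, hy⟩ := hy
  obtain ⟨p⟩ := ConnectedComponent.exact (hx.trans hy.symm)
  suffices ∀ a b : ((K : Set V)ᶜ : Set V), (G.induce (K : Set V)ᶜ).Walk a b → P a → P b from
    this _ _ p h
  intro a b q
  induction q with
  | nil => exact id
  | @cons a b _ hadj _ ih => exact fun ha => ih (step a b hadj a.2 b.2 ha)

theorem EndMem.val_eq {e e' : G.end} {K : Finset V} {x : V} (h : EndMem e K x)
    (h' : EndMem e' K x) : e.val (op K) = e'.val (op K) := by
  obtain ⟨_, h⟩ := h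
  obtain ⟨_, h'⟩ := h'
  exact h.symm.trans h'

theorem end_ext {e e' : G.end} (h : ∀ K, ∃ x, EndMem e K x ∧ EndMem e' K x) : e = e' := by
  refine Subtype.ext (funext fun K => ?_)
  obtain ⟨x, hx, hx'⟩ := h K.unop
  exact hx.val_eq hx'

theorem exists_forall_ge_notMem {f : ℕ → V} (hf : Injective f) (K : Finset V) :
    ∃ N, ∀ n, N ≤ n → f n ∉ K := by
  obtain ⟨N, hN⟩ := (K.finite_toSet.preimage hf.injOn).bddAbove
  refine ⟨N + 1, fun n hn hK => ?_⟩
  have := hN (show n ∈ f ⁻¹' (K : Set V) from hK)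
  omega

theorem componentComplMk_eq_of_ray {f : ℕ → V} (hadj : ∀ n, G.Adj (f n) (f (n + 1)))
    {K : Set V} {N : ℕ} (hN : ∀ n, N ≤ n → f n ∉ K) (m : ℕ) (hm : N ≤ m) :
    G.componentComplMk (hN m hm) = G.componentComplMk (hN N le_rfl) := by
  induction m, hm using Nat.le_induction with
  | base => rfl
  | succ m hm ih =>
    rw [← ih]
    exact (componentComplMk_eq_of_adj G _ _ (hadj m)).symm

/-- An injective ray converges to an end. -/
theorem exists_end_of_ray {f : ℕ → V} (hf : Injective f) (hadj : ∀ n, G.Adj (f n) (f (n + 1))) :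
    ∃ e : G.end, ∀ (K : Finset V) (N : ℕ), (∀ n, N ≤ n → f n ∉ K) → EndMem e K (f N) := by
  choose N hN using exists_forall_ge_notMem hf
  have key : ∀ (K : Finset V) (M M' : ℕ) (h : ∀ n, M ≤ n → f n ∉ (K : Set V))
      (h' : ∀ n, M' ≤ n → f n ∉ (K : Set V)),
      G.componentComplMk (h M le_rfl) = G.componentComplMk (h' M' le_rfl) := fun K M M' h h' =>
    (componentComplMk_eq_of_ray hadj h (max M M') (le_max_left _ _)).symm.trans
      (componentComplMk_eq_of_ray hadj h' (max M M') (le_max_right _ _))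
  refine ⟨⟨fun K => G.componentComplMk (K := (K.unop : Set V)) (hN K.unop _ le_rfl), ?_⟩, ?_⟩
  · intro L K g
    exact key K.unop _ _ (fun n hn hK => hN L.unop n hn (CategoryTheory.le_of_op_hom g hK))
      (hN K.unop)
  · intro K M hM
    exact ⟨hM M le_rfl, key K _ _ hM (hN K)⟩

theorem isIsolatedEnd_of_forall {e : G.end} (K : Finset V)
    (h : ∀ e' : G.end, e'.val (op K) = e.val (op K) → e' = e) : IsIsolatedEnd G e := by
  unfold IsIsolatedEnd endTop
  refine ⟨{f | f (op K) = e.val (op K)}, ?_, ?_⟩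
  · refine (iInf_le (fun K : (Finset V)ᵒᵖ => TopologicalSpace.induced
      (fun f : (∀ K : (Finset V)ᵒᵖ, (componentComplFunctor G).obj K) => f K) ⊥) (op K)) _ ?_
    exact ⟨{e.val (op K)}, trivial, rfl⟩
  · ext e'
    exact ⟨fun he => h e' he, fun he => by rw [Set.mem_singleton_iff] at he; subst he; rfl⟩

/-- The topology on the space of ends generated by the sets of ends lying in a given component
of the complement of a finite set. -/
@[reducible] def endCylinderTop (G : SimpleGraph V) : TopologicalSpace G.end where
  IsOpen U := ∀ e ∈ U, ∃ K : Finset V, ∀ e' : G.end, e'.val (op K) = e.val (op K) → e' ∈ U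
  isOpen_univ _ _ := ⟨∅, fun _ _ => trivial⟩
  isOpen_inter U W hU hW e he := by
    classical
    obtain ⟨K, hK⟩ := hU e he.1
    obtain ⟨L, hL⟩ := hW e he.2
    refine ⟨K ∪ L, fun e' he' => ?_⟩
    obtain ⟨x, hx⟩ := EndMem.exists e (K ∪ L)
    have hx' : EndMem e' (K ∪ L) x := by
      unfold EndMem
      rw [he']
      exact hx
    exact ⟨hK _ ((hx'.mono Finset.subset_union_left).val_eq (hx.mono Finset.subset_union_left)),
      hL _ ((hx'.mono Finset.subset_union_right).val_eq (hx.mono Finset.subset_union_right))⟩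
  isOpen_sUnion S hS e := by
    rintro ⟨U, hU, he⟩
    obtain ⟨K, hK⟩ := hS U hU e he
    exact ⟨K, fun e' he' => ⟨U, hU, hK e' he'⟩⟩

theorem endCylinderTop_le (G : SimpleGraph V) : endCylinderTop G ≤ endTop G := by
  unfold endTop
  rw [induced_iInf]
  refine le_iInf fun K => ?_
  rw [induced_compose]
  rintro U ⟨S, -, rfl⟩ e he
  exact ⟨K.unop, fun e' he' => by
    change e'.val K ∈ S
    exact (show e'.val K = e.val K from he') ▸ he⟩

theorem IsIsolatedEnd.exists_forall {e : G.end} (h : IsIsolatedEnd G e) :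
    ∃ K : Finset V, ∀ e' : G.end, e'.val (op K) = e.val (op K) → e' = e :=
  endCylinderTop_le G _ h e rfl

theorem EndMem.reachable_deleteEdges {e : G.end} {K : Finset V} {v w x y : V}
    (hx : EndMem e K x) (hy : EndMem e K y) (hK : v ∈ K ∨ w ∈ K) :
    (G.deleteEdges {s(v, w)}).Reachable x y := by
  refine hx.induction hy (fun z => (G.deleteEdges {s(v, w)}).Reachable x z) (Reachable.refl x) ?_
  intro a b hab ha hb hr
  refine hr.trans (Adj.reachable ?_)
  rw [deleteEdges_adj]
  refine ⟨hab, ?_⟩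
  simp only [Set.mem_singleton_iff, Sym2.eq_iff]
  rintro (⟨rfl, rfl⟩ | ⟨rfl, rfl⟩) <;> tauto

/-- `p` orients every edge of `G`: each vertex `v` has a unique upward neighbour `p v`. -/
structure IsParent (G : SimpleGraph V) (p : V → V) : Prop where
  adj : ∀ v, G.Adj v (p v)
  ne : ∀ v, p (p v) ≠ v
  edge : ∀ ⦃v w⦄, G.Adj v w → w = p v ∨ p w = v

/-- Every end of a tree induces a parent function, pointing towards that end. -/
theorem exists_isParent (hG : G.IsTree) (e : G.end) :
    ∃ p : V → V, IsParent G p ∧ ∀ v w, G.Adj v w → (EndMem e {v} w ↔ w = p v) := by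
  classical
  have hex : ∀ v, ∃ w, G.Adj v w ∧ EndMem e {v} w := by
    intro v
    obtain ⟨⟨c, k⟩, hc, hk, hck⟩ := ComponentCompl.exists_adj_boundary_pair
      hG.connected.preconnected (K := (({v} : Finset V) : Set V)) ⟨v, by simp⟩
      (e.val (op {v}))
    obtain rfl : k = v := by simpa using hk
    exact ⟨c, hck.symm, hc⟩
  choose p hadj hmem using hex
  have hbr : ∀ v w, G.Adj v w → ¬ (G.deleteEdges {s(v, w)}).Reachable v w := fun v w h =>
    isBridge_iff.mp (isAcyclic_iff_forall_adj_isBridge.mp hG.isAcyclic h)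
  have hpair : ∀ v w x y, EndMem e {v} x → EndMem e {w} y →
      (G.deleteEdges {s(v, w)}).Reachable x y := by
    intro v w x y hx hy
    obtain ⟨z, hz⟩ := EndMem.exists e {v, w}
    exact (hx.reachable_deleteEdges (hz.mono (by simp)) (by simp)).trans
      ((hz.mono (by simp)).reachable_deleteEdges hy (by simp))
  have hsep : ∀ v w, G.Adj v w → EndMem e {v} w → EndMem e {w} v → False :=
    fun v w h hw hv => hbr v w h (hpair v w w v hw hv).symm
  have hedge : ∀ v w, G.Adj v w → w = p v ∨ p w = v := by
    intro v w h
    by_contra! hne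
    refine hbr v w h (Reachable.trans (v := p v) (Adj.reachable ?_)
      ((hpair v w _ _ (hmem v) (hmem w)).trans (Adj.reachable ?_)))
    · rw [deleteEdges_adj]
      refine ⟨hadj v, ?_⟩
      simp only [Set.mem_singleton_iff, Sym2.eq_iff]
      have := (hadj v).ne
      grind
    · rw [deleteEdges_adj]
      refine ⟨(hadj w).symm, ?_⟩
      simp only [Set.mem_singleton_iff, Sym2.eq_iff]
      have := (hadj w).ne
      grind
  refine ⟨p, ⟨hadj, fun v hv => ?_, fun v w h => hedge v w h⟩, fun v w h => ⟨fun hw => ?_, ?_⟩⟩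
  · have := hmem (p v)
    rw [hv] at this
    exact hsep v (p v) (hadj v) (hmem v) this
  · refine (hedge v w h).resolve_right fun hp => ?_
    have := hmem w
    rw [hp] at this
    exact hsep v w h hw this
  · rintro rfl
    exact hmem v

namespace IsParent

variable {p : V → V}

theorem iterate_ne (hp : IsParent G p) (hG : G.IsTree) (v : V) {n : ℕ} (hn : 0 < n) :
    p^[n] v ≠ v := by
  intro hv
  have hex : ∃ n, 0 < n ∧ p^[n] v = v := ⟨n, hn, hv⟩
  classical
  obtain ⟨hpos, hfix⟩ := Nat.find_spec hex
  have hmin : ∀ m, 0 < m → m < Nat.find hex → p^[m] v ≠ v := fun m h0 hm h =>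
    Nat.find_min hex hm ⟨h0, h⟩
  generalize Nat.find hex = N at hpos hfix hmin
  have hreach : ∀ k, k + 1 ≤ N →
      (G.deleteEdges {s(v, p v)}).Reachable (p v) (p^[k + 1] v) := by
    intro k
    induction k with
    | zero => exact fun _ => Reachable.refl _
    | succ k ih =>
      intro hk
      refine (ih (by omega)).trans (Adj.reachable ?_)
      rw [iterate_succ_apply' p (k + 1), deleteEdges_adj]
      refine ⟨hp.adj _, ?_⟩
      have h1 := hmin (k + 1) (by omega) (by omega)
      have h2 := hp.ne v
      simp only [Set.mem_singleton_iff, Sym2.eq_iff]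
      rintro (⟨h, -⟩ | ⟨h, h'⟩)
      · exact h1 h
      · rw [h] at h'
        exact h2 h'
  obtain ⟨k, rfl⟩ : ∃ k, N = k + 1 := ⟨N - 1, by omega⟩
  have := hreach k le_rfl
  rw [hfix] at this
  exact isBridge_iff.mp (isAcyclic_iff_forall_adj_isBridge.mp hG.isAcyclic (hp.adj v)) this.symm

theorem iterate_left_injective (hp : IsParent G p) (hG : G.IsTree) (v : V) {a b : ℕ}
    (h : p^[a] v = p^[b] v) : a = b := by
  wlog hab : a ≤ b generalizing a b
  · exact (this h.symm (by omega)).symm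
  obtain ⟨k, rfl⟩ := Nat.exists_eq_add_of_le hab
  rw [add_comm, iterate_add_apply] at h
  by_contra hne
  exact hp.iterate_ne hG (p^[a] v) (by omega : 0 < k) h.symm

theorem exists_iterate_eq (hp : IsParent G p) (hG : G.IsTree) (v w : V) :
    ∃ i j, p^[i] v = p^[j] w := by
  obtain ⟨q⟩ := hG.connected.preconnected v w
  induction q with
  | nil => exact ⟨0, 0, rfl⟩
  | @cons u v' w hadj _ ih =>
    obtain ⟨i, j, hij⟩ := ih
    rcases hp.edge hadj with rfl | h
    · exact ⟨i + 1, j, hij⟩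
    · refine ⟨i, j + 1, ?_⟩
      rw [← h, ← iterate_succ_apply, iterate_succ_apply', hij, iterate_succ_apply']

theorem exists_child (hp : IsParent G p) {v : V} (hv : (G.neighborSet v).ncard ≠ 1) :
    ∃ c, p c = v := by
  by_contra! h
  refine hv (Set.ncard_eq_one.mpr ⟨p v, ?_⟩)
  ext w
  constructor
  · exact fun hw => (hp.edge hw).resolve_right (h w)
  · rintro rfl
    exact hp.adj v

theorem not_below_of_adj (hp : IsParent G p) {t a b : V} (hab : G.Adj a b) (hb : b ≠ t)
    (ha : ∀ i, p^[i] a ≠ t) (i : ℕ) : p^[i] b ≠ t := by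
  rcases hp.edge hab with rfl | h
  · exact ha (i + 1)
  · cases i with
    | zero => exact hb
    | succ i =>
      rw [iterate_succ_apply, h]
      exact ha i

/-- The ray obtained by iterating the parent function of an end converges to that end. -/
theorem exists_endMem_iterate (hp : IsParent G p) (hG : G.IsTree) {e : G.end}
    (he : ∀ v w, G.Adj v w → (EndMem e {v} w ↔ w = p v)) (K : Finset V) (v : V) :
    ∃ N, (∀ x ∈ K, ∃ i, p^[i] x = p^[N] v) ∧ ∀ n, EndMem e K (p^[n + 1] (p^[N] v)) := by
  classical
  choose i j hij using fun x => hp.exists_iterate_eq hG x v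
  have hK : ∀ x ∈ K, ∃ k, p^[k] x = p^[K.sup j] v := by
    intro x hx
    obtain ⟨k, hk⟩ := Nat.exists_eq_add_of_le (Finset.le_sup (f := j) hx)
    refine ⟨k + i x, ?_⟩
    rw [iterate_add_apply, hij, ← iterate_add_apply, hk, add_comm]
  refine ⟨K.sup j, hK, ?_⟩
  generalize p^[K.sup j] v = t at hK
  have hup : ∀ n k, p^[k] (p^[n + 1] t) ≠ t := fun n k => by
    rw [← iterate_add_apply]
    exact hp.iterate_ne hG t (by omega)
  have hpt : EndMem e {t} (p t) := (he t (p t) (hp.adj t)).mpr rfl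
  obtain ⟨z, hz⟩ := EndMem.exists e (insert t K)
  have hzt : EndMem e {t} z := hz.mono (by simp)
  have hzn : ∀ k, p^[k] z ≠ t := hpt.induction hzt (fun b => ∀ k, p^[k] b ≠ t) (hup 0)
    fun a b hab _ hb => hp.not_below_of_adj hab (by simpa using hb)
  have hmem : EndMem e K (p t) ∧ ∀ k, p^[k] (p t) ≠ t := by
    refine hzt.induction hpt (fun b => EndMem e K b ∧ ∀ k, p^[k] b ≠ t)
      ⟨hz.mono (Finset.subset_insert t K), hzn⟩ fun a b hab _ hb ha => ?_
    have hbn := hp.not_below_of_adj hab (by simpa using hb) ha.2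
    exact ⟨ha.1.of_adj hab fun hbK => (hK b hbK).elim hbn, hbn⟩
  intro n
  induction n with
  | zero => exact hmem.1
  | succ n ih =>
    refine ih.of_adj ?_ fun h => (hK _ h).elim (hup (n + 1))
    rw [iterate_succ_apply' p (n + 1)]
    exact hp.adj _

/-- A descending ray converges to an end other than the one defining the parent function. -/
theorem exists_end_of_descending (hp : IsParent G p) (hG : G.IsTree) {e : G.end}
    (he : ∀ v w, G.Adj v w → (EndMem e {v} w ↔ w = p v)) {ch : V → V} (hch : LeftInverse p ch)
    (c : V) : ∃ e' : G.end, e' ≠ e ∧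
      ∀ (K : Finset V) (N : ℕ), (∀ n, N ≤ n → ch^[n] c ∉ K) → EndMem e' K (ch^[N] c) := by
  have hinj : Injective fun n => ch^[n] c := by
    intro a b hab
    have ha := hch.iterate a c
    have hb := hch.iterate b c
    change ch^[a] c = ch^[b] c at hab
    rw [← hab] at hb
    exact hp.iterate_left_injective hG _ (ha.trans hb.symm)
  obtain ⟨e', he'⟩ := exists_end_of_ray hinj fun n => by
    have := hp.adj (ch^[n + 1] c)
    rw [iterate_succ_apply', hch] at this
    rw [iterate_succ_apply']
    exact this.symm
  refine ⟨e', ?_, he'⟩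
  rintro rfl
  have hc : G.Adj c (ch c) := by
    have := hp.adj (ch c)
    rw [hch] at this
    exact this.symm
  have h1 : EndMem e' {c} (ch c) := he' {c} 1 fun n hn h => by
    have h0 : ch^[n] c = ch^[0] c := by simpa using h
    have := hinj h0
    omega
  rw [he c _ hc] at h1
  have := hp.ne c
  rw [← h1, hch] at this
  exact this rfl

/-- If the end defining the parent function is isolated, some ray towards it is unbranched. -/
theorem exists_unbranched (hp : IsParent G p) (hG : G.IsTree) {e : G.end}
    (he : ∀ v w, G.Adj v w → (EndMem e {v} w ↔ w = p v)) {ch : V → V} (hch : LeftInverse p ch)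
    (hiso : IsIsolatedEnd G e) :
    ∃ t, ∀ n c, p c = p^[n + 1] t → c = p^[n] t := by
  obtain ⟨K, hK⟩ := IsIsolatedEnd.exists_forall hiso
  obtain ⟨v⟩ := hG.connected.nonempty
  obtain ⟨N, hbelow, hmem⟩ := hp.exists_endMem_iterate hG he K v
  refine ⟨p^[N] v, ?_⟩
  generalize p^[N] v = t at hbelow hmem
  intro n c hc
  by_contra hne
  have hray : ∀ k, ch^[k] c ∉ K := by
    intro k hk
    obtain ⟨i, hi⟩ := hbelow _ hk
    have hkc := hch.iterate k c
    rcases le_total k i with h | h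
    · obtain ⟨m, rfl⟩ := Nat.exists_eq_add_of_le h
      rw [add_comm, iterate_add_apply, hkc] at hi
      cases m with
      | zero =>
        obtain rfl : c = t := hi
        have := hp.iterate_left_injective hG c (a := 1) (b := n + 1) hc
        obtain rfl : n = 0 := by omega
        exact hne rfl
      | succ m =>
        rw [iterate_succ_apply, hc, ← iterate_add_apply] at hi
        exact hp.iterate_ne hG t (by omega) hi
    · obtain ⟨m, rfl⟩ := Nat.exists_eq_add_of_le h
      rw [add_comm, iterate_add_apply, add_comm m i, hi] at hkc
      have hm : p^[m + 1] t = p^[n + 1] t := by rw [iterate_succ_apply', hkc, hc]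
      have := hp.iterate_left_injective hG t hm
      obtain rfl : m = n := by omega
      exact hne hkc.symm
  obtain ⟨e', hne', he'⟩ := hp.exists_end_of_descending hG he hch c
  have h1 : EndMem e' K c := he' K 0 fun n _ => hray n
  have h2 : EndMem e K c := (hmem n).of_adj (hc ▸ (hp.adj c).symm) (hray 0)
  exact hne' (hK e' (h1.val_eq h2))

theorem finite_children (hp : IsParent G p) (hfin : ∀ v, (G.neighborSet v).Finite) (v : V) :
    {c | p c = v}.Finite :=
  (hfin v).subset fun c hc => by
    have := hp.adj c
    rw [Set.mem_ofPred_eq] at hc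
    rw [hc] at this
    exact this.symm

end IsParent

section Level

variable {p : V → V} (hfin : ∀ v, {c | p c = v}.Finite)

open Classical in
/-- The finite set of vertices lying `n` steps below `v` for a function `p` with finite fibres. -/
noncomputable def level : ℕ → V → Finset V
  | 0, v => {v}
  | n + 1, v => (level n v).biUnion fun x => (hfin x).toFinset

theorem mem_level {n : ℕ} {v x : V} : x ∈ level hfin n v ↔ p^[n] x = v := by
  induction n generalizing x with
  | zero => simp [level]
  | succ n ih => simp [level, ih]

theorem sum_level_succ {M : Type*} [AddCommMonoid M] (f : V → M) (n : ℕ) (v : V) :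
    ∑ x ∈ level hfin (n + 1) v, f x = ∑ y ∈ level hfin n v, ∑ c ∈ (hfin y).toFinset, f c := by
  classical
  rw [level, Finset.sum_biUnion]
  intro a _ b _ hab
  simp only [onFun, Finset.disjoint_left, Set.Finite.mem_toFinset, Set.mem_ofPred_eq]
  rintro c rfl h
  exact hab h

end Level

/-- If no end other than `e` is isolated, the number of descendants of a vertex is unbounded. -/
theorem IsParent.exists_lt_card_level {p : V → V} (hp : IsParent G p) (hG : G.IsTree) {e : G.end}
    (he : ∀ v w, G.Adj v w → (EndMem e {v} w ↔ w = p v)) {ch : V → V} (hch : LeftInverse p ch)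
    (huniq : ∀ e' : G.end, IsIsolatedEnd G e' → e' = e) (hfin : ∀ v, {c | p c = v}.Finite)
    (v : V) (B : ℕ) : ∃ n, B < (level hfin n v).card := by
  classical
  by_contra! hB
  obtain ⟨N, hN⟩ : ∃ N, ∀ m, (level hfin m v).card ≤ (level hfin N v).card := by
    have hbdd : BddAbove (Set.range fun n => (level hfin n v).card) :=
      ⟨B, by rintro _ ⟨n, rfl⟩; exact hB n⟩
    obtain ⟨N, hN⟩ := Nat.sSup_mem (Set.range_nonempty _) hbdd
    exact ⟨N, fun m => (le_csSup hbdd ⟨m, rfl⟩).trans hN.ge⟩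
  have himg : ∀ m, level hfin m v ⊆ (level hfin (m + 1) v).image p := fun m x hx =>
    Finset.mem_image.mpr ⟨ch x, by rw [mem_level] at hx ⊢; rwa [iterate_succ_apply, hch], hch x⟩
  have hmono : Monotone fun m => (level hfin m v).card := monotone_nat_of_le_succ fun m =>
    (Finset.card_le_card (himg m)).trans Finset.card_image_le
  have hinjOn : ∀ m, N ≤ m → Set.InjOn p (level hfin (m + 1) v) := fun m hm =>
    Finset.injOn_of_card_image_eq (le_antisymm Finset.card_image_le
      ((hN (m + 1)).trans ((hmono hm).trans (Finset.card_le_card (himg m)))))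
  obtain ⟨w, hw⟩ : ∃ w, p^[N] w = v := ⟨ch^[N] v, hch.iterate N v⟩
  have hone : ∀ n c, p c = ch^[n] w → c = ch^[n + 1] w := by
    intro n c hc
    have hlev : ∀ d, p d = ch^[n] w → d ∈ level hfin (N + n + 1) v := fun d hd => by
      rw [mem_level, iterate_succ_apply, hd, iterate_add_apply, hch.iterate n w, hw]
    have hd : p (ch^[n + 1] w) = ch^[n] w := by rw [iterate_succ_apply', hch]
    exact hinjOn (N + n) (by omega) (hlev c hc) (hlev _ hd) (hc.trans hd.symm)
  obtain ⟨e', hne, he'⟩ := hp.exists_end_of_descending hG he hch w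
  refine hne (huniq e' (isIsolatedEnd_of_forall {w} fun e'' heq => ?_))
  obtain ⟨q, hq, heq'⟩ := exists_isParent hG e''
  have hqw : ∀ n, q (ch^[n] w) = ch^[n + 1] w := by
    intro n
    induction n with
    | zero =>
      have hw1 : EndMem e' {w} (ch w) := he' {w} 1 fun n hn h => by
        have hfix : ch^[n] w = w := by simpa using h
        have h2 := hch.iterate n w
        rw [hfix] at h2
        exact hp.iterate_ne hG w hn h2
      have hadj : G.Adj w (ch w) := by
        have := hp.adj (ch w)
        rw [hch] at this
        exact this.symm
      refine ((heq' w (ch w) hadj).mp ?_).symm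
      unfold EndMem
      rw [heq]
      exact hw1
    | succ n ih =>
      rcases hp.edge (hq.adj (ch^[n + 1] w)) with h | h
      · rw [iterate_succ_apply' ch n, hch, ← iterate_succ_apply' ch n, ← ih] at h
        exact absurd h (hq.ne _)
      · exact hone (n + 1) _ h
  have hqn : ∀ n, q^[n] w = ch^[n] w := by
    intro n
    induction n with
    | zero => rfl
    | succ n ih => rw [iterate_succ_apply', ih, hqw]
  refine end_ext fun K => ?_
  obtain ⟨M, -, hM⟩ := hq.exists_endMem_iterate hG heq' K w
  replace hM : ∀ n, EndMem e'' K (ch^[n + 1 + M] w) := fun n => by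
    rw [← hqn, iterate_add_apply]
    exact hM n
  refine ⟨_, hM 0, he' K _ fun n hn => ?_⟩
  obtain ⟨k, rfl⟩ := Nat.exists_eq_add_of_le hn
  convert (hM k).notMem using 3
  omega

end SimpleGraph

namespace TreeDyn

variable {V : Type} {T : TreeDyn V} {p : V → V} {dV : V → ℕ} {dE : V → V → ℕ}

theorem IsLocalDeg.vertex_eq_edge_parent (hd : T.IsLocalDeg dV dE) (hp : IsParent T.G p) {x : V}
    (hx : ∀ c, p c = x → T.F c ≠ T.F (p x)) : dV x = dE x (p x) := by
  rw [hd.2.2.2.2 (hp.adj x)]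
  have hset : {w' | T.G.Adj x w' ∧ T.F w' = T.F (p x)} = {p x} := by
    ext w
    constructor
    · rintro ⟨hw, hF⟩
      exact (hp.edge hw).resolve_right fun h => hx w h hF
    · rintro rfl
      exact ⟨hp.adj x, rfl⟩
  rw [hset, finsum_mem_singleton]

/-- If the edges from `p c` to its parent and to its child `c` have different images, the degree of
`p c` is the sum of the degrees of the edges to the children with the same image as `c`. -/
theorem IsLocalDeg.vertex_eq_sum_children (hd : T.IsLocalDeg dV dE) (hp : IsParent T.G p)
    (hfin : ∀ v, {c | p c = v}.Finite) [DecidableEq V] {c : V}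
    (hc : T.F (p (p c)) ≠ T.F c) :
    dV (p c) = ∑ c' ∈ (hfin (p c)).toFinset with T.F c' = T.F c, dE c' (p c') := by
  rw [hd.2.2.2.2 (hp.adj c).symm]
  have hset : {w' | T.G.Adj (p c) w' ∧ T.F w' = T.F c} =
      ((hfin (p c)).toFinset.filter fun c' => T.F c' = T.F c : Finset V) := by
    ext w
    simp only [Set.mem_ofPred_eq, Finset.coe_filter, Set.Finite.mem_toFinset]
    refine and_congr_left fun hF => ⟨fun hw => ?_, fun h => h ▸ (hp.adj w).symm⟩
    refine (hp.edge hw).resolve_left ?_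
    rintro rfl
    exact hc hF
  rw [hset, finsum_mem_coe_finset]
  refine Finset.sum_congr rfl fun w hw => ?_
  have : p w = p c := by simpa using (Finset.mem_filter.mp hw).1
  rw [hd.1, this]

/-- A branched covering cannot reverse the upward direction of an edge. -/
theorem IsLocalDeg.map_ne_parent (hd : T.IsLocalDeg dV dE) (hp : IsParent T.G p)
    (hfin : ∀ v, {c | p c = v}.Finite) {t : V}
    (ht : ∀ n c, p c = p^[n + 1] t → c = p^[n] t)
    (hgrow : ∀ v B, ∃ n, B < (level hfin n v).card) (y : V) : T.F y ≠ p (T.F (p y)) := by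
  classical
  intro hy
  have hstep : ∀ z : {z // T.F z = p (T.F (p z))}, ∃ z' : {z // T.F z = p (T.F (p z))},
      p z'.1 = z.1 ∧ T.F z'.1 = p (T.F z.1) := by
    rintro ⟨z, hz⟩
    obtain ⟨z', hadj, hz'⟩ := T.edgeSurj (hp.adj (T.F z))
    have hpz : p z' = z := by
      refine (hp.edge hadj).resolve_left ?_
      rintro rfl
      rw [hz] at hz'
      exact hp.ne _ hz'.symm
    exact ⟨⟨z', by rw [hpz, hz']⟩, hpz, hz'⟩
  choose nx hnx hFnx using hstep
  let w : ℕ → V := fun n => (nx^[n] ⟨y, hy⟩).1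
  have hw : ∀ n, p^[n] (w n) = y := by
    intro n
    induction n with
    | zero => rfl
    | succ n ih =>
      simp only [w] at ih ⊢
      rw [iterate_succ_apply' nx, iterate_succ_apply p, hnx, ih]
  have hFw : ∀ n, T.F (w n) = p^[n] (T.F y) := by
    intro n
    induction n with
    | zero => rfl
    | succ n ih =>
      simp only [w] at ih ⊢
      rw [iterate_succ_apply', iterate_succ_apply' p, hFnx, ih]
  obtain ⟨i, j, hij⟩ := hp.exists_iterate_eq T.isTree (T.F y) t
  obtain ⟨M, hM⟩ : ∃ M, ∀ x, T.F x = t → ∀ a, p^[a] x = y → a ≤ M := by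
    have hbound : ∀ x, ∃ b, ∀ a, p^[a] x = y → a ≤ b := by
      intro x
      by_cases h : ∃ b, p^[b] x = y
      · obtain ⟨b, hb⟩ := h
        exact ⟨b, fun a ha => (hp.iterate_left_injective T.isTree x (ha.trans hb.symm)).le⟩
      · exact ⟨0, fun a ha => absurd ⟨a, ha⟩ h⟩
    choose b hb using hbound
    obtain ⟨M, hM⟩ := ((T.finFibers t).image b).bddAbove
    exact ⟨M, fun x hx a ha => (hb x a ha).trans (hM ⟨x, hx, rfl⟩)⟩
  have hdown : ∀ j x, T.F x = p^[j] t → T.F (p x) = p (T.F x) → ∃ i z, p^[i] z = x ∧ T.F z = t := by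
    intro j
    induction j with
    | zero => exact fun x hx _ => ⟨0, x, rfl, hx⟩
    | succ j ih =>
      intro x hx hpx
      have hadj : T.G.Adj (T.F x) (p^[j] t) := by
        rw [hx, iterate_succ_apply']
        exact (hp.adj _).symm
      obtain ⟨x', hadj', hx'⟩ := T.edgeSurj hadj
      have hpx' : p x' = x := by
        refine (hp.edge hadj').resolve_left ?_
        rintro rfl
        rw [hpx, hx, iterate_succ_apply'] at hx'
        exact hp.ne _ hx'
      obtain ⟨i, z, hz, hFz⟩ := ih x' hx' (by rw [hpx', hx, hx', iterate_succ_apply'])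
      exact ⟨i + 1, z, by rw [iterate_succ_apply', hz, hpx'], hFz⟩
  have hinv : ∀ n x, p^[n] x = w (M + 1 + i) →
      T.F x = p (T.F (p x)) ∧ ∃ m, T.F x = p^[m + 1] t := by
    intro n
    induction n with
    | zero =>
      rintro x rfl
      refine ⟨(nx^[M + 1 + i] ⟨y, hy⟩).2, M + j, ?_⟩
      rw [hFw, iterate_add_apply, hij, ← iterate_add_apply]
      congr 1
      omega
    | succ n ih =>
      intro x hx
      obtain ⟨-, m, hm⟩ := ih (p x) hx
      rcases hp.edge (T.adjMap (hp.adj x).symm) with h | h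
      · exact ⟨h, m + 1, by rw [h, hm, iterate_succ_apply' p (m + 1)]⟩
      · obtain ⟨k, z, hz, hFz⟩ := hdown m x (ht m _ (h.trans hm)) h.symm
        have := hM z hFz (M + 1 + i + (n + 1 + k)) (by
          rw [iterate_add_apply, iterate_add_apply _ (n + 1), hz, hx, hw])
        omega
  have hdeg : ∀ n x, p^[n] x = w (M + 1 + i) → dV x = dE x (p x) := by
    intro n x hx
    refine hd.vertex_eq_edge_parent hp fun c hc hFc => ?_
    obtain ⟨hcF, -⟩ := hinv (n + 1) c (by rw [iterate_succ_apply, hc, hx])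
    rw [hc, (hinv n x hx).1, hFc] at hcF
    exact hp.ne _ hcF.symm
  have hsum : ∀ n x, p^[n] x = w (M + 1 + i) → ∑ c ∈ (hfin x).toFinset, dV c = dV x := by
    intro n x hx
    have hxF := (hinv n x hx).1
    have hch : ∀ c, p c = x → p^[n + 1] c = w (M + 1 + i) := fun c hc => by
      rw [iterate_succ_apply, hc, hx]
    have hchF : ∀ c, p c = x → T.F c = p (T.F x) := fun c hc => by
      rw [(hinv (n + 1) c (hch c hc)).1, hc]
    obtain ⟨c, hc⟩ : ∃ c, p c = x := ⟨_, hnx ⟨x, hxF⟩⟩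
    have hsame := hd.vertex_eq_sum_children hp hfin (c := c) (by
      rw [hc, hchF c hc, hxF]
      exact (hp.ne _).symm)
    rw [hc, Finset.filter_true_of_mem fun c' hc' => by
      rw [hchF c hc, hchF c' (by simpa using hc')]] at hsame
    rw [hsame]
    exact Finset.sum_congr rfl fun c' hc' => hdeg (n + 1) c' (hch c' (by simpa using hc'))
  have htotal : ∀ n, ∑ x ∈ level hfin n (w (M + 1 + i)), dV x = dV (w (M + 1 + i)) := by
    intro n
    induction n with
    | zero => simp [level]
    | succ n ih =>
      rw [sum_level_succ, ← ih]
      exact Finset.sum_congr rfl fun x hx => hsum n x ((mem_level hfin).mp hx)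
  obtain ⟨n, hn⟩ := hgrow (w (M + 1 + i)) (dV (w (M + 1 + i)))
  have hcard := Finset.card_nsmul_le_sum (level hfin n (w (M + 1 + i))) dV 1 fun x _ => hd.2.1 x
  rw [htotal, smul_eq_mul, mul_one] at hcard
  omega

theorem IsLocalDeg.edge_parent (hd : T.IsLocalDeg dV dE) (hp : IsParent T.G p)
    (hF : ∀ v, T.F (p v) = p (T.F v))
    (v : V) : dE v (p v) = dV v := by
  refine (hd.vertex_eq_edge_parent hp fun c hc h => ?_).symm
  have h' := hF c
  rw [h, hc, hF] at h'
  exact hp.ne _ h'.symm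

theorem IsLocalDeg.sum_children (hd : T.IsLocalDeg dV dE) (hp : IsParent T.G p)
    (hF : ∀ v, T.F (p v) = p (T.F v)) (hfin : ∀ v, {c | p c = v}.Finite)
    (v : V) (g : V → ℕ) :
    ∑ c ∈ (hfin v).toFinset, dV c * g (T.F c) =
      dV v * ∑ y ∈ (hfin (T.F v)).toFinset, g y := by
  classical
  have hmaps : ∀ c ∈ (hfin v).toFinset, T.F c ∈ (hfin (T.F v)).toFinset := by
    intro c hc
    simp only [Set.Finite.mem_toFinset, Set.mem_ofPred_eq] at hc ⊢
    rw [← hF, hc]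
  rw [← Finset.sum_fiberwise_of_maps_to hmaps, Finset.mul_sum]
  refine Finset.sum_congr rfl fun y hy => ?_
  replace hy : p y = T.F v := by simpa using hy
  obtain ⟨c, hadj, rfl⟩ := T.edgeSurj (hy ▸ (hp.adj y).symm : T.G.Adj (T.F v) y)
  have hne : T.F (p v) ≠ T.F c := by
    rw [hF, ← hy]
    exact hp.ne _
  obtain rfl : p c = v := (hp.edge hadj).resolve_left fun h => hne (by rw [h])
  rw [hd.vertex_eq_sum_children hp hfin hne, Finset.sum_mul]
  refine Finset.sum_congr rfl fun c' hc' => ?_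
  rw [hd.edge_parent hp hF, (Finset.mem_filter.mp hc').2]

theorem IsLocalDeg.sum_level (hd : T.IsLocalDeg dV dE) (hp : IsParent T.G p)
    (hF : ∀ v, T.F (p v) = p (T.F v)) (hfin : ∀ v, {c | p c = v}.Finite)
    (n : ℕ) (v : V) (g : V → ℕ) :
    ∑ x ∈ level hfin n v, dV x * g (T.F x) = dV v * ∑ y ∈ level hfin n (T.F v), g y := by
  induction n generalizing g with
  | zero => simp [level]
  | succ n ih =>
    rw [sum_level_succ, sum_level_succ, ← ih]
    exact Finset.sum_congr rfl fun x _ => hd.sum_children hp hF hfin x g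

theorem IsLocalDeg.sum_children_sub_one (hd : T.IsLocalDeg dV dE) (hp : IsParent T.G p)
    (hF : ∀ v, T.F (p v) = p (T.F v)) (hfin : ∀ v, {c | p c = v}.Finite)
    (v : V) :
    ∑ c ∈ (hfin v).toFinset, (dV c - 1) ≤ dV v - 1 := by
  have h := hd.2.2.2.1 v
  have hset : T.G.neighborSet v = insert (p v) {c | p c = v} := by
    ext w
    refine ⟨fun hw => hp.edge hw, ?_⟩
    rintro (rfl | rfl)
    · exact hp.adj v
    · exact (hp.adj w).symm
  rw [hset, finsum_mem_insert _ (show p v ∉ {c | p c = v} from hp.ne v) (hfin v),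
    hd.edge_parent hp hF, finsum_mem_eq_finite_toFinset_sum _ (hfin v)] at h
  have hsum : ∑ c ∈ (hfin v).toFinset, (dE v c - 1) = ∑ c ∈ (hfin v).toFinset, (dV c - 1) := by
    refine Finset.sum_congr rfl fun c hc => ?_
    obtain rfl : p c = v := by simpa using hc
    rw [hd.1, hd.edge_parent hp hF]
  omega

theorem IsLocalDeg.sum_level_sub_one (hd : T.IsLocalDeg dV dE) (hp : IsParent T.G p)
    (hF : ∀ v, T.F (p v) = p (T.F v)) (hfin : ∀ v, {c | p c = v}.Finite)
    (n : ℕ) (v : V) :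
    ∑ x ∈ level hfin n v, (dV x - 1) ≤ dV v - 1 := by
  induction n with
  | zero => simp [level]
  | succ n ih =>
    rw [sum_level_succ]
    exact (Finset.sum_le_sum fun x _ => hd.sum_children_sub_one hp hF hfin x).trans ih

theorem IsLocalDeg.card_level_le (hd : T.IsLocalDeg dV dE) (hp : IsParent T.G p)
    (hF : ∀ v, T.F (p v) = p (T.F v)) (hfin : ∀ v, {c | p c = v}.Finite)
    (n : ℕ) (v : V) :
    (level hfin n v).card ≤ dV v * (level hfin n (T.F v)).card := by
  have h := hd.sum_level hp hF hfin n v fun _ => 1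
  simp only [mul_one, Finset.sum_const, smul_eq_mul] at h
  rw [← h, Finset.card_eq_sum_ones]
  exact Finset.sum_le_sum fun x _ => hd.2.1 x

theorem IsLocalDeg.le_card_level (hd : T.IsLocalDeg dV dE) (hp : IsParent T.G p)
    (hF : ∀ v, T.F (p v) = p (T.F v)) (hfin : ∀ v, {c | p c = v}.Finite)
    (n : ℕ) (v : V) :
    dV v * (level hfin n (T.F v)).card + 1 ≤ dV v + (level hfin n v).card := by
  have h := hd.sum_level hp hF hfin n v fun _ => 1
  simp only [mul_one, Finset.sum_const, smul_eq_mul] at h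
  have h' : ∑ x ∈ level hfin n v, dV x =
      ∑ x ∈ level hfin n v, (dV x - 1) + (level hfin n v).card := by
    rw [Finset.card_eq_sum_ones, ← Finset.sum_add_distrib]
    exact Finset.sum_congr rfl fun x _ => (Nat.sub_add_cancel (hd.2.1 x)).symm
  have := hd.sum_level_sub_one hp hF hfin n v
  have := hd.2.1 v
  omega

theorem IsLocalDeg.vertex_le (hd : T.IsLocalDeg dV dE) (hp : IsParent T.G p)
    (hF : ∀ v, T.F (p v) = p (T.F v)) (hfin : ∀ v, {c | p c = v}.Finite)
    {dV' : V → ℕ} {dE' : V → V → ℕ} (hd' : T.IsLocalDeg dV' dE')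
    (hgrow : ∀ v B, ∃ n, B < (level hfin n v).card) (v : V) : dV v ≤ dV' v := by
  by_contra! hlt
  obtain ⟨n, hn⟩ := hgrow (T.F v) (dV v)
  have h1 := hd.le_card_level hp hF hfin n v
  have h2 := hd'.card_level_le hp hF hfin n v
  have h3 := Nat.mul_le_mul_right (level hfin n (T.F v)).card (Nat.succ_le_of_lt hlt)
  rw [Nat.succ_mul] at h3
  omega

end TreeDyn

/-- **Uniqueness of the local degree function.**
If `F : T → T` is a polynomial-like branched covering of a simplicial tree,
then its local degree function is unique: two local degree functions agree on
all vertices and on all edges. -/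
theorem local_degree_unique
    {V : Type} (T : TreeDyn V) (infty : T.G.end)
    (hpl : T.IsPolyLike infty)
    (dV₁ dV₂ : V → ℕ) (dE₁ dE₂ : V → V → ℕ)
    (h₁ : T.IsLocalDeg dV₁ dE₁) (h₂ : T.IsLocalDeg dV₂ dE₂) :
    (∀ v : V, dV₁ v = dV₂ v) ∧
    (∀ v w : V, T.G.Adj v w → dE₁ v w = dE₂ v w) := by
  obtain ⟨-, hiso, huniq, hval, -⟩ := hpl
  obtain ⟨p, hp, hmem⟩ := exists_isParent T.isTree infty
  choose ch hch using fun v => hp.exists_child (hval v)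
  have hfin := hp.finite_children T.locFin
  have hgrow := hp.exists_lt_card_level T.isTree hmem hch huniq hfin
  obtain ⟨t, ht⟩ := hp.exists_unbranched T.isTree hmem hch hiso
  have hF : ∀ v, T.F (p v) = p (T.F v) := fun v =>
    ((hp.edge (T.adjMap (hp.adj v).symm)).resolve_left
      (h₁.map_ne_parent hp hfin ht hgrow v)).symm
  have hV : ∀ v, dV₁ v = dV₂ v := fun v =>
    le_antisymm (h₁.vertex_le hp hF hfin h₂ hgrow v) (h₂.vertex_le hp hF hfin h₁ hgrow v)
  refine ⟨hV, fun v w hvw => ?_⟩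
  rcases hp.edge hvw with rfl | rfl
  · rw [h₁.edge_parent hp hF, h₂.edge_parent hp hF, hV]
  · rw [h₁.1, h₂.1, h₁.edge_parent hp hF, h₂.edge_parent hp hF, hV]
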